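/- Let $p, r \geq 0$ and $q \geq 1$ be integers. Then $\det\left(\binom{p+r}{p+i-j}\right)_{0 \leq i,j \leq q-1} = \det\left(\binom{p+r+i+j}{p+j}\right)_{0 \leq i,j \leq q-1}$, i.e., the $q \times q$ band determinant of binomial coefficients equals the $q \times q$ Pascal-rhombus determinant $\Diamond(p+r,\, p,\, q-1)$. -/

import Mathlib

/-!
Pascal's rule iterates to Vandermonde's identity, which says that multiplying a column
`k ↦ f n (m - k)` on the left by the lower triangular Pascal matrix raises its upper index by the
row number. Pascal's rule is invariant under `m ↦ n - m`, so a column `k ↦ f n (m + k)` has both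
indices raised instead. Raising both indices of the band matrix along its columns and then the
upper index along its rows turns it into the rhombus matrix (transposed in between), and the
Pascal matrix is unimodular.
-/

/-- The extended binomial coefficient: `0` whenever the lower index is negative
(and, via `Nat.choose`, also `0` when it exceeds the upper index). -/
def ebinom (n : ℕ) (m : ℤ) : ℕ := if 0 ≤ m then n.choose m.toNat else 0

theorem ebinom_natCast (n k : ℕ) : ebinom n (k : ℤ) = n.choose k := by
  simp [ebinom]

/-- Two-dimensional arrays obeying Pascal's rule, as `(n, m) ↦ n.choose m` does. The lower index
ranges over `ℤ` so that the rule needs no boundary case. -/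
def IsPascalArray {M : Type*} [Add M] (f : ℕ → ℤ → M) : Prop :=
  ∀ n m, f (n + 1) m = f n m + f n (m - 1)

theorem isPascalArray_ebinom : IsPascalArray ebinom := by
  intro n m
  rcases lt_trichotomy m 0 with hneg | rfl | hpos
  · simp [ebinom, show ¬ 0 ≤ m by lia, show ¬ 1 ≤ m by lia]
  · simp [ebinom]
  · obtain ⟨k, rfl⟩ : ∃ k : ℕ, m = ((k + 1 : ℕ) : ℤ) := ⟨(m - 1).toNat, by lia⟩
    rw [Nat.cast_succ, add_sub_cancel_right, ← Nat.cast_succ]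
    simp only [ebinom_natCast, Nat.choose_succ_succ', add_comm]

namespace IsPascalArray

theorem map {M N F : Type*} [Add M] [Add N] [FunLike F M N] [AddHomClass F M N] {f : ℕ → ℤ → M}
    (hf : IsPascalArray f) (φ : F) : IsPascalArray fun n m => φ (f n m) :=
  fun n m => (congrArg φ (hf n m)).trans (map_add φ _ _)

theorem reflect {M : Type*} [AddCommMagma M] {f : ℕ → ℤ → M} (hf : IsPascalArray f) :
    IsPascalArray fun n m => f n (n - m) := by
  intro n m
  have hleft : ((n + 1 : ℕ) : ℤ) - m = n - (m - 1) := by lia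
  have hright : (n : ℤ) - (m - 1) - 1 = n - m := by ring
  simp only [hleft, hf n, hright, add_comm]

variable {M : Type*} [AddCommMonoid M] {f : ℕ → ℤ → M}

theorem vandermonde (hf : IsPascalArray f) (n i : ℕ) (m : ℤ) :
    f (n + i) m = ∑ k ∈ Finset.range (i + 1), i.choose k • f n (m - k) := by
  induction i generalizing m with
  | zero => simp
  | succ i ih =>
    rw [Finset.sum_choose_succ_nsmul (fun k _ => f n (m - k)), ← add_assoc, hf, ih, ih, add_comm]
    simp only [Nat.cast_succ, sub_sub, add_comm]

theorem vandermonde_diagonal (hf : IsPascalArray f) (n i : ℕ) (m : ℤ) :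
    f (n + i) (m + i) = ∑ k ∈ Finset.range (i + 1), i.choose k • f n (m + k) := by
  have hshift : ((n + i : ℕ) : ℤ) - (n - m) = m + i := by lia
  have hterm (k : ℕ) : (n : ℤ) - (n - m - k) = m + k := by ring
  simpa only [hshift, hterm] using hf.reflect.vandermonde n i (n - m)

end IsPascalArray

/-- The `q × q` lower triangular Pascal matrix, with rows and columns numbered from `0`;
it performs the row operations of the proof. -/
def pascalMatrix (R : Type*) [NatCast R] (q : ℕ) : Matrix (Fin q) (Fin q) R :=
  Matrix.of fun i k => ((i : ℕ).choose k : R)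

theorem det_pascalMatrix (R : Type*) [CommRing R] (q : ℕ) : (pascalMatrix R q).det = 1 := by
  have htriangular : (pascalMatrix R q).IsLowerTriangular := fun i j (hij : (i : ℕ) < j) => by
    simp [pascalMatrix, Nat.choose_eq_zero_of_lt hij]
  rw [Matrix.det_of_isLowerTriangular _ htriangular]
  simp [pascalMatrix]

theorem pascalMatrix_mul_of {R ι : Type*} [NonAssocSemiring R] {q : ℕ} (g : ℕ → ι → R) :
    pascalMatrix R q * Matrix.of (fun (k : Fin q) j => g k j) =
      Matrix.of fun (i : Fin q) j =>
        ∑ k ∈ Finset.range (i + 1), (i : ℕ).choose k • g k j := by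
  ext i j
  simp only [pascalMatrix, Matrix.mul_apply, Matrix.of_apply, ← nsmul_eq_mul]
  rw [Fin.sum_univ_eq_sum_range (fun k => (i : ℕ).choose k • g k j)]
  refine (Finset.sum_subset (Finset.range_mono i.isLt) fun k _ hk => ?_).symm
  rw [Nat.choose_eq_zero_of_lt (by simpa using hk), zero_nsmul]

namespace IsPascalArray

variable {R : Type*} [NonAssocSemiring R] {f : ℕ → ℤ → R} {ι : Type*} {q : ℕ}

theorem pascalMatrix_mul_of_sub (hf : IsPascalArray f) (n : ι → ℕ) (m : ι → ℤ) :
    pascalMatrix R q * Matrix.of (fun (k : Fin q) j => f (n j) (m j - (k : ℕ))) =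
      Matrix.of fun (i : Fin q) j => f (n j + i) (m j) := by
  simp only [pascalMatrix_mul_of fun k j => f (n j) (m j - k), hf.vandermonde]

theorem pascalMatrix_mul_of_add (hf : IsPascalArray f) (n : ι → ℕ) (m : ι → ℤ) :
    pascalMatrix R q * Matrix.of (fun (k : Fin q) j => f (n j) (m j + (k : ℕ))) =
      Matrix.of fun (i : Fin q) j => f (n j + i) (m j + (i : ℕ)) := by
  simp only [pascalMatrix_mul_of fun k j => f (n j) (m j + k), hf.vandermonde_diagonal]

theorem pascalMatrix_mul_transpose_pascalMatrix_mul_band (hf : IsPascalArray f) (n : ℕ) (m : ℤ) :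
    pascalMatrix R q * (pascalMatrix R q *
        Matrix.of fun i j : Fin q => f n (m + (i : ℕ) - (j : ℕ))).transpose =
      Matrix.of fun i j : Fin q => f (n + i + j) (m + (j : ℕ)) := by
  have hcolumns : (pascalMatrix R q *
        Matrix.of fun i j : Fin q => f n (m + (i : ℕ) - (j : ℕ))).transpose =
      Matrix.of fun i j : Fin q => f (n + j) (m + (j : ℕ) - (i : ℕ)) := by
    simp only [add_sub_right_comm m]
    rw [hf.pascalMatrix_mul_of_add (fun _ => n) fun j : Fin q => m - (j : ℕ)]
    rfl
  rw [hcolumns, hf.pascalMatrix_mul_of_sub (fun j : Fin q => n + j) fun j => m + (j : ℕ)]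
  simp only [add_right_comm n]

end IsPascalArray

theorem band_det_eq_rhombus_det_general {R : Type*} [CommRing R] {f : ℕ → ℤ → R}
    (hf : IsPascalArray f) (n : ℕ) (m : ℤ) (q : ℕ) :
    (Matrix.of fun i j : Fin q => f n (m + (i : ℕ) - (j : ℕ))).det =
      (Matrix.of fun i j : Fin q => f (n + i + j) (m + (j : ℕ))).det := by
  rw [← hf.pascalMatrix_mul_transpose_pascalMatrix_mul_band, Matrix.det_mul, Matrix.det_transpose,
    Matrix.det_mul, det_pascalMatrix, one_mul, one_mul]

/-- The `q × q` band determinant of binomial coefficients equals the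
`q × q` Pascal-rhombus determinant `◇(p+r, p, q-1)`. -/
theorem band_det_eq_rhombus_det (p r q : ℕ) (hq : 1 ≤ q) :
    (Matrix.of fun i j : Fin q =>
        (ebinom (p + r) ((p : ℤ) + (i : ℕ) - (j : ℕ)) : ℤ)).det =
      (Matrix.of fun i j : Fin q =>
        (Nat.choose (p + r + (i : ℕ) + (j : ℕ)) (p + (j : ℕ)) : ℤ)).det := by
  simpa only [← Nat.cast_add, ebinom_natCast, Nat.coe_castAddMonoidHom] using
    band_det_eq_rhombus_det_general (isPascalArray_ebinom.map (Nat.castAddMonoidHom ℤ)) (p + r) p q
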